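/- Let S be a finite nonempty type, P a row-stochastic matrix on S, β a real number with 0 ≤ β < 1, and C : S → ℝ a reward vector. Then the vector V := (I − β·P)⁻¹ ⬝ C is the unique solution of the linear equation V = C + β·(P ⬝ V), and for every state s one has V s = ∑_{t=0}^∞ β^t · (P^t ⬝ C) s (the expected total discounted reward of the stationary strategy with transition matrix P, started at s). -/

import Mathlib

open Matrix

/-!
The rows of `β • P` have `ℓ¹` norm `β < 1`, so the operator norm of `β • P` for the sup norm on
vectors is less than one. The Neumann series `∑ (β • P) ^ t` therefore converges to
`(1 - β • P)⁻¹`, and applying both sides to `C` gives the series for the value vector. The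
fixed-point equation is the linear system `(1 - β • P) *ᵥ V = C`, whose matrix is invertible.
-/

section Algebra

variable {S R : Type*} [Fintype S] [DecidableEq S] [CommRing R]

theorem eq_inv_mulVec_iff_mulVec_eq {A : Matrix S S R} (hA : IsUnit A) (V C : S → R) :
    V = A⁻¹ *ᵥ C ↔ A *ᵥ V = C := by
  have hdet : IsUnit A.det := A.isUnit_iff_isUnit_det.mp hA
  constructor
  · rintro rfl
    rw [mulVec_mulVec, mul_nonsing_inv A hdet, one_mulVec]
  · rintro rfl
    rw [mulVec_mulVec, nonsing_inv_mul A hdet, one_mulVec]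

theorem eq_inv_one_sub_mulVec_iff {A : Matrix S S R} (hA : IsUnit (1 - A)) (V C : S → R) :
    V = (1 - A)⁻¹ *ᵥ C ↔ V = C + A *ᵥ V := by
  rw [eq_inv_mulVec_iff_mulVec_eq hA, sub_mulVec, one_mulVec, sub_eq_iff_eq_add]

end Algebra

theorem hasSum_mulVec_const {ι m n R : Type*} [Fintype n] [NonUnitalNonAssocSemiring R]
    [TopologicalSpace R] [IsTopologicalSemiring R] {f : ι → Matrix m n R} {A : Matrix m n R}
    (hf : HasSum f A) (v : n → R) : HasSum (fun i => f i *ᵥ v) (A *ᵥ v) :=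
  hf.map (mulVec.addMonoidHomLeft v) (continuous_id.matrix_mulVec continuous_const)

theorem sum_norm_smul_apply_of_row_stochastic {m n : Type*} [Fintype n] {P : Matrix m n ℝ}
    (hP_nonneg : ∀ i j, 0 ≤ P i j) (hP_row : ∀ i, ∑ j, P i j = 1) (β : ℝ) (i : m) :
    ∑ j, ‖(β • P) i j‖ = |β| := by
  simp only [Matrix.smul_apply, smul_eq_mul, norm_mul, Real.norm_eq_abs,
    abs_of_nonneg (hP_nonneg i _), ← Finset.mul_sum, hP_row, mul_one]

section LinftyOpNorm

open scoped Matrix.Norms.Operator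

theorem linfty_opNorm_lt_iff {m n E : Type*} [Fintype m] [Fintype n] [NormedAddCommGroup E]
    {A : Matrix m n E} {r : ℝ} (hr : 0 < r) : ‖A‖ < r ↔ ∀ i, ∑ j, ‖A i j‖ < r := by
  lift r to NNReal using hr.le
  rw [linfty_opNorm_def, NNReal.coe_lt_coe, Finset.sup_lt_iff (NNReal.coe_pos.mp hr)]
  simp only [Finset.mem_univ, true_imp_iff, ← NNReal.coe_lt_coe, NNReal.coe_sum, coe_nnnorm]

theorem hasSummableGeomSeries_linftyOp {S R : Type*} [Fintype S] [DecidableEq S] [NormedRing R]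
    [CompleteSpace R] : HasSummableGeomSeries (Matrix S S R) := by
  -- Instance search does not identify the uniformity of this norm with the entrywise one.
  have : @CompleteSpace (Matrix S S R) PseudoMetricSpace.toUniformSpace :=
    inferInstanceAs (CompleteSpace (S → S → R))
  infer_instance

end LinftyOpNorm

section NeumannSeries

variable {S R : Type*} [Fintype S] [DecidableEq S]

theorem isUnit_one_sub_of_sum_norm_lt_one [NormedRing R] [CompleteSpace R] {A : Matrix S S R}
    (hA : ∀ s, ∑ s', ‖A s s'‖ < 1) : IsUnit (1 - A) := by
  let := Matrix.linftyOpNormedRing (n := S) (α := R)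
  have := hasSummableGeomSeries_linftyOp (S := S) (R := R)
  exact isUnit_one_sub_of_norm_lt_one ((linfty_opNorm_lt_iff one_pos).mpr hA)

theorem hasSum_pow_inv_one_sub_of_sum_norm_lt_one [NormedCommRing R] [CompleteSpace R]
    {A : Matrix S S R} (hA : ∀ s, ∑ s', ‖A s s'‖ < 1) :
    HasSum (fun t : ℕ => A ^ t) (1 - A)⁻¹ := by
  let := Matrix.linftyOpNormedRing (n := S) (α := R)
  have := hasSummableGeomSeries_linftyOp (S := S) (R := R)
  rw [nonsing_inv_eq_ringInverse]
  exact hasSum_geom_series_inverse A ((linfty_opNorm_lt_iff one_pos).mpr hA)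

end NeumannSeries

theorem stmt1_general {S R : Type*} [Fintype S] [DecidableEq S] [NormedCommRing R]
    [CompleteSpace R] (A : Matrix S S R) (hA : ∀ s, ∑ s', ‖A s s'‖ < 1) (C : S → R) :
    (1 - A)⁻¹ *ᵥ C = C + A *ᵥ ((1 - A)⁻¹ *ᵥ C) ∧
    (∀ W : S → R, W = C + A *ᵥ W → W = (1 - A)⁻¹ *ᵥ C) ∧
    HasSum (fun t : ℕ => A ^ t *ᵥ C) ((1 - A)⁻¹ *ᵥ C) := by
  have hunit : IsUnit (1 - A) := isUnit_one_sub_of_sum_norm_lt_one hA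
  have hfix (V : S → R) : V = (1 - A)⁻¹ *ᵥ C ↔ V = C + A *ᵥ V :=
    eq_inv_one_sub_mulVec_iff hunit V C
  have hseries : HasSum (fun t : ℕ => A ^ t) (1 - A)⁻¹ :=
    hasSum_pow_inv_one_sub_of_sum_norm_lt_one hA
  exact ⟨(hfix _).mp rfl, fun W => (hfix W).mpr, hasSum_mulVec_const hseries C⟩

theorem stmt1 {S : Type*} [Fintype S] [Nonempty S] [DecidableEq S]
    (P : Matrix S S ℝ) (hP_nonneg : ∀ s s', 0 ≤ P s s')
    (hP_row : ∀ s, ∑ s', P s s' = 1)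
    (β : ℝ) (hβ0 : 0 ≤ β) (hβ1 : β < 1) (C : S → ℝ) :
    (((1 : Matrix S S ℝ) - β • P)⁻¹ *ᵥ C)
        = C + β • (P *ᵥ (((1 : Matrix S S ℝ) - β • P)⁻¹ *ᵥ C)) ∧
    (∀ W : S → ℝ, W = C + β • (P *ᵥ W) → W = ((1 : Matrix S S ℝ) - β • P)⁻¹ *ᵥ C) ∧
    (∀ s : S, HasSum (fun t : ℕ => β ^ t * ((P ^ t) *ᵥ C) s)
        ((((1 : Matrix S S ℝ) - β • P)⁻¹ *ᵥ C) s)) := by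
  have hA (s : S) : ∑ s', ‖(β • P) s s'‖ < 1 := by
    rwa [sum_norm_smul_apply_of_row_stochastic hP_nonneg hP_row, abs_of_nonneg hβ0]
  simpa only [smul_pow, smul_mulVec, Pi.hasSum, Pi.smul_apply, smul_eq_mul]
    using stmt1_general (β • P) hA C
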